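/- Let f : A^p → A^m be an A-linear map, M = coker(f), and let N = coker(Hom_A(f, A) : Hom_A(A^m, A) → Hom_A(A^p, A)) be the Auslander transpose of M. Then there is an A-linear isomorphism t(M) ≅ Ext^1_A(N, A) between the torsion submodule of M and the first Ext module of N with values in A. -/

import Mathlib

/-!
The transpose `N` has the projective presentation `(A^m)* → (A^p)* → N → 0`, which extends to a
projective resolution of `N` (`presResolution`). Computing `Ext^1` with it and identifying `A^m`
with its double dual, an element `x : A^m` gives a 1-cocycle exactly when every functional on `A^m`
vanishing on `range f` vanishes at `x`, and a coboundary exactly when `x ∈ range f`. Hence `Ext^1`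
is the submodule of `coker f` on which all functionals vanish. Over a domain this is the torsion
submodule: torsion is killed by every functional, and a non-torsion element of a finitely generated
module is detected by some functional, obtained over the fraction field by clearing denominators
(`exists_dual_ne_zero`).
-/

open CategoryTheory

/-- `Ext^i_A(N, A)` as a module over `A`, defined via the derived functor `Ext` of Mathlib. -/
noncomputable def extModule (A : Type) [CommRing A] (N : Type) [AddCommGroup N] [Module A N]
    (i : ℕ) : ModuleCat A :=
  ((Ext A (ModuleCat A) i).obj (Opposite.op (ModuleCat.of A N))).obj (ModuleCat.of A A)

open scoped nonZeroDivisors in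
/-- An element of `A^m` whose class modulo `L` is not torsion is detected by a functional killing
`L`: over the fraction field such a functional exists, and its finitely many values on the
standard basis have a common denominator. -/
theorem exists_dual_ne_zero (A : Type) [CommRing A] [IsDomain A] (m : ℕ)
    (L : Submodule A (Fin m → A)) (x : Fin m → A)
    (hx : L.mkQ x ∉ Submodule.torsion A ((Fin m → A) ⧸ L)) :
    ∃ φ : Module.Dual A (Fin m → A), (∀ l ∈ L, φ l = 0) ∧ φ x ≠ 0 := by
  let M := (Fin m → A) ⧸ L
  let K := FractionRing A
  let j : M →ₗ[A] LocalizedModule A⁰ M := LocalizedModule.mkLinearMap A⁰ M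
  have hj : j (L.mkQ x) ≠ 0 := by
    intro h
    obtain ⟨c, hc⟩ := (IsLocalizedModule.eq_zero_iff A⁰ j).1 h
    exact hx ((Submodule.mem_torsion_iff _).2 ⟨c, hc⟩)
  obtain ⟨ψ, hψ⟩ : ∃ ψ : Module.Dual K (LocalizedModule A⁰ M), ψ (j (L.mkQ x)) ≠ 0 := by
    by_contra! h
    exact hj ((Module.forall_dual_apply_eq_zero_iff K _).1 h)
  obtain ⟨a, ha⟩ := IsLocalization.exist_integer_multiples_of_finite A⁰
    (fun i : Fin m => ψ (j (L.mkQ (Pi.single i 1))))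
  -- `c i` is `a` times the value of `ψ` at the `i`-th basis vector, so `φ` is `a • ψ` on `A^m`.
  choose c hc using ha
  let φ : Module.Dual A (Fin m → A) := Fintype.linearCombination A c
  have key : ∀ v, algebraMap A K (φ v) = (a : A) • ψ (j (L.mkQ v)) := by
    have : (Algebra.linearMap A K) ∘ₗ φ =
        (a : A) • ((ψ.restrictScalars A) ∘ₗ j ∘ₗ L.mkQ) := by
      refine LinearMap.pi_ext' fun i => LinearMap.ext_ring ?_
      simpa [φ, Fintype.linearCombination_apply_single] using! hc i
    exact fun v => congr($this v)
  refine ⟨φ, fun l hl => ?_, fun h => ?_⟩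
  · apply IsFractionRing.injective A K
    rw [key, Submodule.mkQ_apply, (Submodule.Quotient.mk_eq_zero L).2 hl]
    simp
  · have := key x
    rw [h, map_zero, eq_comm, Algebra.smul_def, mul_eq_zero] at this
    rcases this with h | h
    · exact nonZeroDivisors.coe_ne_zero a (IsFractionRing.injective A K (by rw [h, map_zero]))
    · exact hψ h

lemma exact_congr {C : Type*} [Category C] [Abelian C] {X Y Z : C}
    {f f' : X ⟶ Y} {g g' : Y ⟶ Z} {w' : f' ≫ g' = 0}
    (h : (ShortComplex.mk f' g' w').Exact) (hf : f = f') (hg : g = g') (w : f ≫ g = 0) :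
    (ShortComplex.mk f g w).Exact := by
  subst hf hg
  exact h

lemma epi_congr {C : Type*} [Category C] {X Y : C} {f g : X ⟶ Y} (h : f = g) (hg : Epi g) : Epi f :=
  h ▸ hg

section

variable {C : Type*} [Category C] [Abelian C] [EnoughProjectives C] {X₀ X₁ Z : C}

lemma projective_d_comp {X Y : C} (f : X ⟶ Y) : Projective.d f ≫ f = 0 :=
  let zero {S : ShortComplex C} (_ : S.Exact) : S.f ≫ S.g = 0 := S.zero
  zero (exact_d_f f)

/-- The differentials of `presComplex d`: starting from `d`, each one is preceded by a map from a
projective onto its kernel. The source of each arrow is by definition the target of the next one. -/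
noncomputable def presArrow (d : X₁ ⟶ X₀) : ℕ → Arrow C
  | 0 => Arrow.mk d
  | n + 1 => Arrow.mk (Projective.d (presArrow d n).hom)

/-- The differential of `presComplex d` from degree `n + 1` to degree `n`. -/
noncomputable def presD (d : X₁ ⟶ X₀) (n : ℕ) :
    (presArrow d (n + 1)).right ⟶ (presArrow d n).right :=
  (presArrow d n).hom

/-- The chain complex starting with a given `d : X₁ ⟶ X₀` in degrees `1` and `0`, and continued in
degrees `≥ 2` by repeatedly covering the kernel of the last differential by a projective. -/
noncomputable def presComplex (d : X₁ ⟶ X₀) : ChainComplex C ℕ :=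
  ChainComplex.of (fun n => (presArrow d n).right) (presD d)
    fun n => projective_d_comp (presArrow d n).hom

lemma presComplex_d (d : X₁ ⟶ X₀) (n : ℕ) : (presComplex d).d (n + 1) n = presD d n :=
  ChainComplex.of_d (X := fun n => (presArrow d n).right) (d := presD d) n

lemma presComplex_d_1_0 (d : X₁ ⟶ X₀) : (presComplex d).d 1 0 = d :=
  presComplex_d d 0

lemma presComplex_exactAt_succ (d : X₁ ⟶ X₀) (n : ℕ) :
    (presComplex d).ExactAt (n + 1) := by
  rw [HomologicalComplex.exactAt_iff' _ (n + 1 + 1) (n + 1) n (by simp) (by simp)]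
  exact exact_congr (exact_d_f (presArrow d n).hom) (presComplex_d d (n + 1))
    (presComplex_d d n) _

instance [Projective X₀] [Projective X₁] (d : X₁ ⟶ X₀) (n : ℕ) :
    Projective ((presComplex d).X n) :=
  match n with
  | 0 => ‹Projective X₀›
  | 1 => ‹Projective X₁›
  | _ + 2 => Projective.projective_over _

lemma presComplex_d_comp (d : X₁ ⟶ X₀) (π : X₀ ⟶ Z) (w : d ≫ π = 0) :
    (presComplex d).d 1 0 ≫ (show (presComplex d).X 0 ⟶ Z from π) = 0 :=
  (congr_arg (fun k : X₁ ⟶ X₀ => k ≫ π) (presComplex_d_1_0 d)).trans w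

/-- A projective presentation `X₁ ⟶ X₀ ⟶ Z ⟶ 0` extended to a projective resolution of `Z`
whose first differential is the given `d`. -/
noncomputable def presResolution [Projective X₀] [Projective X₁] (d : X₁ ⟶ X₀) (π : X₀ ⟶ Z)
    (w : d ≫ π = 0) [Epi π] (h : (ShortComplex.mk d π w).Exact) : ProjectiveResolution Z where
  complex := presComplex d
  π := (ChainComplex.toSingle₀Equiv _ _).symm ⟨π, presComplex_d_comp d π w⟩
  quasiIso := ⟨fun n => by
    cases n
    · rw [ChainComplex.quasiIsoAt₀_iff, ShortComplex.quasiIso_iff_of_zeros']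
      · exact ⟨exact_congr h (presComplex_d_1_0 d)
          (ChainComplex.toSingle₀Equiv_symm_apply_f_zero _ _) _,
          epi_congr (ChainComplex.toSingle₀Equiv_symm_apply_f_zero _ _) ‹Epi π›⟩
      all_goals rfl
    · rw [quasiIsoAt_iff_exactAt']
      · apply presComplex_exactAt_succ
      · apply ChainComplex.exactAt_succ_single_obj⟩

end

/-- If `F ≃ S.X₂` matches `L` with the boundaries of `S`, and the preimage in `F` of the torsion of
`F ⧸ L` with the cycles of `S`, then the torsion of `F ⧸ L` is the homology of `S`: both are
quotients of that preimage by `L`. -/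
lemma nonempty_torsion_equiv_homology {A : Type} [CommRing A] {F : Type} [AddCommGroup F]
    [Module A F] (L : Submodule A F) (S : ShortComplex (ModuleCat A)) (e : F ≃ₗ[A] S.X₂)
    (hg : ∀ x, S.g.hom (e x) = 0 ↔ L.mkQ x ∈ Submodule.torsion A (F ⧸ L))
    (hf : ∀ x, e x ∈ LinearMap.range S.f.hom ↔ x ∈ L) :
    Nonempty (Submodule.torsion A (F ⧸ L) ≃ₗ[A] S.homology) := by
  let T := Submodule.torsion A (F ⧸ L)
  let W : Submodule A F := T.comap L.mkQ
  let u : W →ₗ[A] T := L.mkQ.restrict fun _ h => h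
  have hu : Function.Surjective u := by
    rintro ⟨y, hy⟩
    obtain ⟨x, rfl⟩ := L.mkQ_surjective y
    exact ⟨⟨x, hy⟩, rfl⟩
  let v : W →ₗ[A] (LinearMap.ker S.g.hom ⧸ LinearMap.range S.moduleCatToCycles) :=
    (LinearMap.range S.moduleCatToCycles).mkQ ∘ₗ
      e.toLinearMap.restrict fun x h => (hg x).2 h
  have hv : Function.Surjective v := by
    refine (Submodule.mkQ_surjective _).comp ?_
    rintro ⟨y, hy⟩
    obtain ⟨x, rfl⟩ := e.surjective y
    exact ⟨⟨x, (hg x).1 hy⟩, rfl⟩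
  have huv : LinearMap.ker u = LinearMap.ker v := by
    ext ⟨x, hx⟩
    have h1 : u ⟨x, hx⟩ = 0 ↔ x ∈ L := by
      rw [← Submodule.Quotient.mk_eq_zero L, Subtype.ext_iff]
      rfl
    have h2 : v ⟨x, hx⟩ = 0 ↔ x ∈ L := by
      rw [← hf]
      refine (Submodule.Quotient.mk_eq_zero _).trans ?_
      exact ⟨fun ⟨y, hy⟩ => ⟨y, congr_arg Subtype.val hy⟩, fun ⟨y, hy⟩ => ⟨y, Subtype.ext hy⟩⟩
    rw [LinearMap.mem_ker, LinearMap.mem_ker, h1, h2]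
  exact ⟨(u.quotKerEquivOfSurjective hu).symm ≪≫ₗ Submodule.quotEquivOfEq _ _ huv ≪≫ₗ
    v.quotKerEquivOfSurjective hv ≪≫ₗ S.moduleCatHomologyIso.symm.toLinearEquiv⟩

/-- Let `A` be a commutative Noetherian integral domain, `f : A^p → A^m` an `A`-linear map,
`M = coker f`, and `N = coker (Hom_A(f, A))` the Auslander transpose of `M`. Then the torsion
submodule `t(M)` is `A`-linearly isomorphic to `Ext^1_A(N, A)`. -/
theorem torsion_iso_ext_one_of_transpose (A : Type) [CommRing A] [IsDomain A]
    [IsNoetherianRing A] (p m : ℕ) (f : (Fin p → A) →ₗ[A] (Fin m → A)) :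
    Nonempty ((Submodule.torsion A ((Fin m → A) ⧸ LinearMap.range f)) ≃ₗ[A]
      extModule A
        (Module.Dual A (Fin p → A) ⧸ LinearMap.range (LinearMap.dualMap f)) 1) := by
  let d : ModuleCat.of A (Module.Dual A (Fin m → A)) ⟶ ModuleCat.of A (Module.Dual A (Fin p → A)) :=
    ModuleCat.ofHom f.dualMap
  let π : ModuleCat.of A (Module.Dual A (Fin p → A)) ⟶
    ModuleCat.of A (Module.Dual A (Fin p → A) ⧸ LinearMap.range f.dualMap) :=
    ModuleCat.ofHom (Submodule.mkQ _)
  have w : d ≫ π = 0 := ModuleCat.hom_ext (LinearMap.range_mkQ_comp _)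
  have : Epi π := (ModuleCat.epi_iff_surjective _).2 (Submodule.mkQ_surjective _)
  have hex : (ShortComplex.mk d π w).Exact := by
    rw [ShortComplex.moduleCat_exact_iff_range_eq_ker]
    exact (Submodule.ker_mkQ _).symm
  have : Projective (ModuleCat.of A (Module.Dual A (Fin m → A))) :=
    (IsProjective.iff_projective _).1 inferInstance
  have : Projective (ModuleCat.of A (Module.Dual A (Fin p → A))) :=
    (IsProjective.iff_projective _).1 inferInstance
  let P := presResolution d π w hex
  let Y := P.complex.linearYonedaObj A (ModuleCat.of A A)
  let S := Y.sc' 0 1 2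
  let i : extModule A (Module.Dual A (Fin p → A) ⧸ LinearMap.range f.dualMap) 1 ≅ S.homology :=
    P.isoExt 1 (ModuleCat.of A A) ≪≫
      ShortComplex.homologyMapIso (Y.isoSc' 0 1 2 (by simp) (by simp))
  -- `e x` is evaluation at `x`, as an element of `Hom(P₁, A) = (A^m)**`.
  let e : (Fin m → A) ≃ₗ[A] S.X₂ := Module.evalEquiv A (Fin m → A) ≪≫ₗ
    (ModuleCat.homLinearEquiv (S := A) (M := ModuleCat.of A (Module.Dual A (Fin m → A)))
      (N := ModuleCat.of A A)).symm
  have hP : P.complex.d 1 0 = d := presComplex_d_1_0 d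
  have hker : ∀ z, P.complex.d 1 0 z = 0 → ∃ y, P.complex.d 2 1 y = z :=
    (ShortComplex.moduleCat_exact_iff _).1 (P.exact_succ 0)
  have hf : ∀ x, e x ∈ LinearMap.range S.f.hom ↔ x ∈ LinearMap.range f := by
    have hSf : ∀ φ : ModuleCat.of A (Module.Dual A (Fin p → A)) ⟶ ModuleCat.of A A,
        S.f.hom φ = d ≫ φ := by
      intro φ
      rw [← hP]
      rfl
    intro x
    constructor
    · rintro ⟨φ, hφ⟩
      obtain ⟨y, hy⟩ := (Module.evalEquiv A (Fin p → A)).surjective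
        (ModuleCat.Hom.hom (show ModuleCat.of A (Module.Dual A (Fin p → A)) ⟶
          ModuleCat.of A A from φ))
      refine ⟨y, (Module.evalEquiv A (Fin m → A)).injective (LinearMap.ext fun ψ => ?_)⟩
      have h1 : d ≫ φ = ModuleCat.ofHom (Module.Dual.eval A (Fin m → A) x) :=
        (hSf φ).symm.trans hφ
      have h2 : φ.hom (f.dualMap ψ) = ψ x := congr($h1 ψ)
      have h3 : (f.dualMap ψ) y = φ.hom (f.dualMap ψ) := congr($hy (f.dualMap ψ))
      exact h3.trans h2
    · rintro ⟨y, rfl⟩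
      refine ⟨ModuleCat.ofHom (Module.Dual.eval A _ y), (hSf _).trans ?_⟩
      rfl
  have hg : ∀ x, S.g.hom (e x) = 0 ↔
      (LinearMap.range f).mkQ x ∈ Submodule.torsion A ((Fin m → A) ⧸ LinearMap.range f) := by
    intro x
    have hSg : S.g.hom (e x) = 0 ↔ ∀ ψ : Module.Dual A (Fin m → A), d ψ = 0 → ψ x = 0 := by
      rw [← hP]
      constructor
      · intro h ψ hψ
        -- By exactness, the kernel of `d 1 0` is all of the image of `d 2 1`.
        obtain ⟨y, rfl⟩ := hker ψ hψ
        exact congr(ModuleCat.Hom.hom $h y)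
      · intro h
        refine ModuleCat.hom_ext (LinearMap.ext fun y => ?_)
        -- The image of `d 2 1` lies in the kernel of `d 1 0`, where evaluation at `x` vanishes.
        exact h (P.complex.d 2 1 y) congr($(P.complex.d_comp_d 2 1 0) y)
    rw [hSg]
    constructor
    · intro h
      by_contra hx
      obtain ⟨ψ, hψ, hne⟩ := exists_dual_ne_zero A m _ x hx
      exact hne (h ψ (LinearMap.ext fun y => hψ _ ⟨y, rfl⟩))
    · intro h ψ hψ
      obtain ⟨a, ha⟩ := (Submodule.mem_torsion_iff _).1 h
      obtain ⟨y, hy⟩ := (Submodule.Quotient.mk_eq_zero _).1 ha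
      have h1 : ψ (f y) = 0 := congr($hψ y)
      have h2 : f y = (a : A) • x := hy
      rw [h2, map_smul, smul_eq_mul] at h1
      exact (mul_eq_zero.1 h1).resolve_left (nonZeroDivisors.coe_ne_zero a)
  obtain ⟨t⟩ := nonempty_torsion_equiv_homology _ S e hg hf
  exact ⟨t ≪≫ₗ i.symm.toLinearEquiv⟩
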